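/- For any complex numbers z_1, ..., z_n with |z_1| ≥ |z_j| for all j, and any positive integer m, there exists an integer ν with m < ν ≤ m + n such that |z_1^ν + z_2^ν + ... + z_n^ν| ≥ |z_1|^ν · (n / (4e(m+n)))^n. -/

import Mathlib

/-!
Split the numbers in the unit disc, one of them of modulus `1`, at a radius `r ≤ 1`, into the set
`A` of those with modulus above `r` and the set `B` of those with modulus below `r`. The polynomial
`p` of least degree that equals `1` on `A` and `0` on `B` and vanishes to order `m + 1` at `0`
involves only the monomials `X ^ ν` with `m < ν ≤ m + n`. Summing `p` over all the points expresses
the positive integer `|A|` as a combination of the power sums in that range, so a bound `S` on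
these power sums is at least the reciprocal of the sum of the moduli of the coefficients of `p`.
Newton's recursion bounds that sum, and the outcome is
`r ^ m * ∏ j, |‖z j‖ - r| ≤ 2 ^ n * S` for every `r ∈ (0, 1]`.

The left-hand side is a weighted polynomial in `r`, and the maximum principle after the
substitution `r = |α + β w| ^ 2`, `|w| = 1`, shows that it is not small for all `r`. The choice
`α = (2 * m + n) / (2 * (m + n))`, `β = n / (2 * (m + n))` gives the constant of the theorem.
-/

section CoeffNorm

open Polynomial

variable {R : Type*} [SeminormedRing R]

/-- The `ℓ¹` norm of the coefficient sequence of a polynomial. -/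
noncomputable def coeffNorm (p : R[X]) : ℝ := p.sum fun _ a ↦ ‖a‖

lemma coeffNorm_nonneg (p : R[X]) : 0 ≤ coeffNorm p :=
  Finset.sum_nonneg fun _ _ ↦ norm_nonneg _

@[simp]
lemma coeffNorm_zero : coeffNorm (0 : R[X]) = 0 := sum_zero_index _

@[simp]
lemma coeffNorm_monomial (k : ℕ) (a : R) : coeffNorm (monomial k a) = ‖a‖ :=
  sum_monomial_index a _ norm_zero

@[simp]
lemma coeffNorm_C (a : R) : coeffNorm (C a) = ‖a‖ := coeffNorm_monomial 0 a

@[simp]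
lemma coeffNorm_neg (p : R[X]) : coeffNorm (-p) = coeffNorm p := by
  simp only [coeffNorm, sum_def, support_neg, coeff_neg, norm_neg]

lemma coeffNorm_add_le (p q : R[X]) : coeffNorm (p + q) ≤ coeffNorm p + coeffNorm q := by
  have coeffNorm_eq {f : R[X]} (hf : f.support ⊆ p.support ∪ q.support) :
      coeffNorm f = ∑ k ∈ p.support ∪ q.support, ‖f.coeff k‖ :=
    sum_eq_of_subset _ (fun _ ↦ norm_zero) hf
  rw [coeffNorm_eq support_add, coeffNorm_eq Finset.subset_union_left,
    coeffNorm_eq Finset.subset_union_right, ← Finset.sum_add_distrib]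
  gcongr with k
  rw [coeff_add]
  exact norm_add_le _ _

lemma coeffNorm_sub_le (p q : R[X]) : coeffNorm (p - q) ≤ coeffNorm p + coeffNorm q := by
  simpa only [sub_eq_add_neg, coeffNorm_neg] using coeffNorm_add_le p (-q)

lemma coeffNorm_sum_le {ι : Type*} (s : Finset ι) (f : ι → R[X]) :
    coeffNorm (∑ i ∈ s, f i) ≤ ∑ i ∈ s, coeffNorm (f i) :=
  Finset.le_sum_of_subadditive coeffNorm coeffNorm_zero.le coeffNorm_add_le s f

lemma coeffNorm_mul_le (p q : R[X]) : coeffNorm (p * q) ≤ coeffNorm p * coeffNorm q := by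
  rw [mul_eq_sum_sum]
  calc coeffNorm (∑ i ∈ p.support, q.sum fun j b ↦ monomial (i + j) (p.coeff i * b))
      ≤ ∑ i ∈ p.support, ∑ j ∈ q.support,
          coeffNorm (monomial (i + j) (p.coeff i * q.coeff j)) :=
        (coeffNorm_sum_le _ _).trans (Finset.sum_le_sum fun _ _ ↦ coeffNorm_sum_le _ _)
    _ ≤ ∑ i ∈ p.support, ∑ j ∈ q.support, ‖p.coeff i‖ * ‖q.coeff j‖ := by
        gcongr
        rw [coeffNorm_monomial]
        exact norm_mul_le _ _
    _ = coeffNorm p * coeffNorm q := (Finset.sum_mul_sum _ _ _ _).symm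

lemma coeffNorm_X_sub_C_le [NormOneClass R] (a : R) : coeffNorm (X - C a) ≤ 1 + ‖a‖ := by
  refine (coeffNorm_sub_le _ _).trans_eq ?_
  rw [← monomial_one_one_eq_X, coeffNorm_monomial, coeffNorm_C, norm_one]

lemma norm_map_le_coeffNorm_mul {E : Type*} [SeminormedAddCommGroup E] [Module R E]
    [IsBoundedSMul R E] (φ : R[X] →ₗ[R] E) {p : R[X]} {S : ℝ}
    (hS : ∀ ν ∈ p.support, ‖φ (X ^ ν)‖ ≤ S) : ‖φ p‖ ≤ coeffNorm p * S := by
  have expansion : φ p = ∑ ν ∈ p.support, p.coeff ν • φ (X ^ ν) := by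
    conv_lhs => rw [p.as_sum_support_C_mul_X_pow]
    simp only [map_sum, ← smul_eq_C_mul, map_smul]
  calc ‖φ p‖ ≤ ∑ ν ∈ p.support, ‖p.coeff ν‖ * ‖φ (X ^ ν)‖ := by
        rw [expansion]
        exact (norm_sum_le _ _).trans (Finset.sum_le_sum fun _ _ ↦ norm_smul_le _ _)
    _ ≤ ∑ ν ∈ p.support, ‖p.coeff ν‖ * S := by gcongr with ν hν; exact hS ν hν
    _ = coeffNorm p * S := (Finset.sum_mul _ _ _).symm

end CoeffNorm

section StepInterpolant

open Polynomial

variable {K : Type*}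

/-- `p` is the Hermite interpolant, of degree less than the number of nodes, of the function equal
to `1` near the nodes in `A` and to `0` near the nodes in `B`. A node of multiplicity `k` imposes
agreement to order `k`, which is expressed by divisibility. -/
structure IsStepInterpolant [CommRing K] (A B : Multiset K) (p : K[X]) : Prop where
  degree_lt : p.degree < (A.card + B.card : ℕ)
  dvd_sub_one : (A.map fun a ↦ X - C a).prod ∣ p - 1
  dvd : (B.map fun b ↦ X - C b).prod ∣ p

namespace IsStepInterpolant

lemma zero [CommRing K] (B : Multiset K) : IsStepInterpolant 0 B (0 : K[X]) where
  degree_lt := degree_zero.trans_lt (WithBot.bot_lt_coe _)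
  dvd_sub_one := by simp
  dvd := dvd_zero _

lemma one [CommRing K] {A : Multiset K} (hA : A ≠ 0) : IsStepInterpolant A 0 (1 : K[X]) where
  degree_lt := degree_one_le.trans_lt <| by
    exact_mod_cast Nat.add_pos_left (Multiset.card_pos.2 hA) _
  dvd_sub_one := by simp
  dvd := by simp

lemma eval_eq_one [CommRing K] {A B : Multiset K} {p : K[X]} (hp : IsStepInterpolant A B p)
    {a : K} (ha : a ∈ A) : p.eval a = 1 := by
  have : X - C a ∣ p - 1 :=
    (Multiset.dvd_prod (Multiset.mem_map_of_mem (fun a ↦ X - C a) ha)).trans hp.dvd_sub_one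
  rwa [dvd_iff_isRoot, IsRoot.def, eval_sub, eval_one, sub_eq_zero] at this

lemma eval_eq_zero [CommRing K] {A B : Multiset K} {p : K[X]} (hp : IsStepInterpolant A B p)
    {b : K} (hb : b ∈ B) : p.eval b = 0 :=
  dvd_iff_isRoot.1 <|
    (Multiset.dvd_prod (Multiset.mem_map_of_mem (fun b ↦ X - C b) hb)).trans hp.dvd

lemma newton_step [Field K] {A B : Multiset K} {a b : K} {u v : K[X]}
    (hu : IsStepInterpolant (a ::ₘ A) B u) (hv : IsStepInterpolant A (b ::ₘ B) v) (hab : a ≠ b) :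
    IsStepInterpolant (a ::ₘ A) (b ::ₘ B)
      (C (a - b)⁻¹ * ((X - C b) * u - (X - C a) * v)) where
  degree_lt := by
    have degree_linear_mul_lt {N : ℕ} (c : K) {q : K[X]} (hq : q.degree < N) :
        ((X - C c) * q).degree < ((N + 1 : ℕ) : WithBot ℕ) := by
      rw [degree_lt_iff_coeff_zero] at hq ⊢
      intro k hk
      obtain ⟨k, rfl⟩ := Nat.exists_eq_add_of_le' (Nat.le_of_add_left_le hk)
      rw [sub_mul, coeff_sub, coeff_X_mul, coeff_C_mul, hq k (by omega), hq (k + 1) (by omega),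
        mul_zero, sub_zero]
    rw [← smul_eq_C_mul]
    refine (degree_smul_le _ _).trans_lt ((degree_sub_le _ _).trans_lt (max_lt ?_ ?_))
    · simpa only [Multiset.card_cons, Nat.add_assoc] using degree_linear_mul_lt b hu.degree_lt
    · simpa only [Multiset.card_cons, Nat.add_assoc, Nat.add_comm, Nat.add_left_comm] using
        degree_linear_mul_lt a hv.degree_lt
  dvd_sub_one := by
    have h : C (a - b)⁻¹ * ((X - C b) * u - (X - C a) * v) - 1 =
        C (a - b)⁻¹ * ((X - C b) * (u - 1) - (X - C a) * (v - 1)) := by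
      have hC : (C (a - b)⁻¹ : K[X]) * (C a - C b) = 1 := by
        rw [← C_sub, ← C_mul, inv_mul_cancel₀ (sub_ne_zero.2 hab), C_1]
      linear_combination hC
    rw [h, Multiset.map_cons, Multiset.prod_cons]
    refine dvd_mul_of_dvd_right (dvd_sub (dvd_mul_of_dvd_right ?_ _)
      (mul_dvd_mul_left _ hv.dvd_sub_one)) _
    simpa only [Multiset.map_cons, Multiset.prod_cons] using hu.dvd_sub_one
  dvd := by
    rw [Multiset.map_cons, Multiset.prod_cons]
    refine dvd_mul_of_dvd_right (dvd_sub (mul_dvd_mul_left _ hu.dvd)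
      (dvd_mul_of_dvd_right ?_ _)) _
    simpa only [Multiset.map_cons, Multiset.prod_cons] using hv.dvd

end IsStepInterpolant

variable [NormedField K]

lemma norm_sub_mul_coeffNorm_newton_step_le {a b : K} (hab : a ≠ b) (u v : K[X]) :
    ‖a - b‖ * coeffNorm (C (a - b)⁻¹ * ((X - C b) * u - (X - C a) * v)) ≤
      (1 + ‖b‖) * coeffNorm u + (1 + ‖a‖) * coeffNorm v := by
  have coeffNorm_linear_mul_le (c : K) (q : K[X]) :
      coeffNorm ((X - C c) * q) ≤ (1 + ‖c‖) * coeffNorm q :=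
    (coeffNorm_mul_le _ _).trans
      (mul_le_mul_of_nonneg_right (coeffNorm_X_sub_C_le c) (coeffNorm_nonneg q))
  calc ‖a - b‖ * coeffNorm (C (a - b)⁻¹ * ((X - C b) * u - (X - C a) * v))
      ≤ ‖a - b‖ * (‖a - b‖⁻¹ * coeffNorm ((X - C b) * u - (X - C a) * v)) := by
        gcongr
        simpa only [coeffNorm_C, norm_inv] using coeffNorm_mul_le (C (a - b)⁻¹) _
    _ = coeffNorm ((X - C b) * u - (X - C a) * v) :=
        mul_inv_cancel_left₀ (norm_ne_zero_iff.2 (sub_ne_zero.2 hab)) _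
    _ ≤ (1 + ‖b‖) * coeffNorm u + (1 + ‖a‖) * coeffNorm v :=
        (coeffNorm_sub_le _ _).trans
          (add_le_add (coeffNorm_linear_mul_le b u) (coeffNorm_linear_mul_le a v))

lemma exists_isStepInterpolant_singleton_zero (A : Multiset K) (hA : 0 ∉ A) :
    ∃ p : K[X], IsStepInterpolant A {0} p ∧ coeffNorm p ≤ (A.map fun a ↦ 1 + ‖a‖⁻¹).prod - 1 := by
  induction A using Multiset.induction with
  | empty => exact ⟨0, .zero _, by simp⟩
  | cons a A ih =>
    rw [Multiset.mem_cons, not_or] at hA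
    obtain ⟨v, hv, hv_le⟩ := ih hA.2
    have ha : a ≠ 0 := Ne.symm hA.1
    refine ⟨_, (IsStepInterpolant.one (Multiset.cons_ne_zero (m := A))).newton_step hv ha, ?_⟩
    have coeffNorm_one : coeffNorm (1 : K[X]) = 1 := by rw [← C_1, coeffNorm_C, norm_one]
    have step := norm_sub_mul_coeffNorm_newton_step_le ha 1 v
    nth_rewrite 1 [sub_zero] at step
    rw [norm_zero, coeffNorm_one, add_zero, one_mul] at step
    have ha' : 0 < ‖a‖ := norm_pos_iff.2 ha
    refine le_of_mul_le_mul_left (step.trans ?_) ha'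
    rw [Multiset.map_cons, Multiset.prod_cons]
    calc 1 + (1 + ‖a‖) * coeffNorm v
        ≤ 1 + (1 + ‖a‖) * ((A.map fun a ↦ 1 + ‖a‖⁻¹).prod - 1) := by gcongr
      _ = ‖a‖ * ((1 + ‖a‖⁻¹) * (A.map fun a ↦ 1 + ‖a‖⁻¹).prod - 1) := by
        field_simp
        ring

/-- The factor by which a node `z` multiplies the bound for the coefficients of the interpolant
that jumps across the circle of radius `r`. -/
noncomputable def nodeWeight (r : ℝ) (z : K) : ℝ := (1 + ‖z‖) / |‖z‖ - r|

lemma nodeWeight_nonneg (r : ℝ) (z : K) : 0 ≤ nodeWeight r z := by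
  unfold nodeWeight
  positivity

lemma nodeWeight_recursion {r : ℝ} {a b : K} (ha : r < ‖a‖) (hb : ‖b‖ < r) :
    (1 + ‖b‖) * nodeWeight r a + (1 + ‖a‖) * nodeWeight r b =
      (‖a‖ - ‖b‖) * (nodeWeight r a * nodeWeight r b) := by
  have ha' : ‖a‖ - r ≠ 0 := (sub_pos.2 ha).ne'
  have hb' : r - ‖b‖ ≠ 0 := (sub_pos.2 hb).ne'
  rw [nodeWeight, nodeWeight, abs_of_pos (sub_pos.2 ha), abs_sub_comm, abs_of_pos (sub_pos.2 hb)]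
  field_simp
  ring

lemma one_add_inv_norm_le_nodeWeight {r : ℝ} (hr : 0 ≤ r) {a : K} (ha : r < ‖a‖) :
    1 + ‖a‖⁻¹ ≤ nodeWeight r a := by
  have ha' : 0 < ‖a‖ := hr.trans_lt ha
  calc 1 + ‖a‖⁻¹ = (1 + ‖a‖) / ‖a‖ := by field_simp; ring
    _ ≤ (1 + ‖a‖) / (‖a‖ - r) := by gcongr; linarith
    _ = nodeWeight r a := by rw [nodeWeight, abs_of_pos (sub_pos.2 ha)]

/- The node `0` prescribed besides `B` does not contribute its weight `r⁻¹` to the bound. -/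
lemma exists_isStepInterpolant_coeffNorm_le {r : ℝ} (hr : 0 ≤ r) (B A : Multiset K)
    (hB : ∀ b ∈ B, ‖b‖ < r) (hA : ∀ a ∈ A, r < ‖a‖) :
    ∃ p : K[X], IsStepInterpolant A (0 ::ₘ B) p ∧
      coeffNorm p ≤ (A.map (nodeWeight r)).prod * (B.map (nodeWeight r)).prod := by
  have weights_nonneg (s : Multiset K) : 0 ≤ (s.map (nodeWeight r)).prod :=
    Multiset.prod_map_nonneg fun z _ ↦ nodeWeight_nonneg r z
  induction B using Multiset.induction generalizing A with
  | empty =>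
    have h0A : 0 ∉ A := fun h ↦ (hA 0 h).not_ge (norm_zero.trans_le hr)
    obtain ⟨p, hp, hp_le⟩ := exists_isStepInterpolant_singleton_zero A h0A
    refine ⟨p, hp, hp_le.trans ?_⟩
    rw [Multiset.map_zero, Multiset.prod_zero, mul_one]
    refine (sub_le_self _ zero_le_one).trans ?_
    exact Multiset.prod_map_le_prod_map₀ _ _ (fun a _ ↦ by positivity)
      fun a ha ↦ one_add_inv_norm_le_nodeWeight hr (hA a ha)
  | cons b B ihB =>
    induction A using Multiset.induction with
    | empty =>
      refine ⟨0, .zero _, ?_⟩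
      rw [coeffNorm_zero]
      exact mul_nonneg (weights_nonneg _) (weights_nonneg _)
    | cons a A ihA =>
      obtain ⟨u, hu, hu_le⟩ := ihB (a ::ₘ A) (fun x hx ↦ hB x (Multiset.mem_cons_of_mem hx)) hA
      obtain ⟨v, hv, hv_le⟩ := ihA fun x hx ↦ hA x (Multiset.mem_cons_of_mem hx)
      have ha : r < ‖a‖ := hA a (Multiset.mem_cons_self _ _)
      have hb : ‖b‖ < r := hB b (Multiset.mem_cons_self _ _)
      have hab : a ≠ b := fun h ↦ (hb.trans ha).ne (congrArg norm h.symm)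
      rw [Multiset.cons_swap] at hv ⊢
      refine ⟨_, hu.newton_step hv hab, ?_⟩
      refine le_of_mul_le_mul_left ((norm_sub_mul_coeffNorm_newton_step_le hab u v).trans ?_)
        (norm_pos_iff.2 (sub_ne_zero.2 hab))
      simp only [Multiset.map_cons, Multiset.prod_cons] at hu_le hv_le ⊢
      set α := (A.map (nodeWeight r)).prod
      set β := (B.map (nodeWeight r)).prod
      have hα : 0 ≤ α := weights_nonneg A
      have hβ : 0 ≤ β := weights_nonneg B
      have := nodeWeight_nonneg r a
      have := nodeWeight_nonneg r b
      calc (1 + ‖b‖) * coeffNorm u + (1 + ‖a‖) * coeffNorm v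
          ≤ (1 + ‖b‖) * (nodeWeight r a * α * β) + (1 + ‖a‖) * (α * (nodeWeight r b * β)) := by
            gcongr
        _ = (‖a‖ - ‖b‖) * (nodeWeight r a * α * (nodeWeight r b * β)) := by
            linear_combination α * β * nodeWeight_recursion ha hb
        _ ≤ ‖a - b‖ * (nodeWeight r a * α * (nodeWeight r b * β)) := by
            gcongr
            exact norm_sub_norm_le a b

end StepInterpolant

section RadialBound

open Polynomial

variable {ι K : Type*} [Fintype ι] {m : ℕ} {r S : ℝ}

lemma exists_eval_eq_ite_and_coeffNorm_le [NormedField K] (m : ℕ) (hr : 0 < r) {z : ι → K}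
    (hzr : ∀ j, ‖z j‖ ≠ r) :
    ∃ p : K[X], (∀ ν ∈ p.support, m < ν ∧ ν ≤ m + Fintype.card ι) ∧
      (∀ j, p.eval (z j) = if r < ‖z j‖ then 1 else 0) ∧
      coeffNorm p ≤ r⁻¹ ^ m * ∏ j, nodeWeight r (z j) := by
  let A : Multiset K := (Finset.univ.filter fun j ↦ r < ‖z j‖).val.map z
  let B : Multiset K := (Finset.univ.filter fun j ↦ ¬ r < ‖z j‖).val.map z
  have mem_A {j : ι} (hj : r < ‖z j‖) : z j ∈ A := Multiset.mem_map_of_mem z (by simpa using hj)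
  have mem_B {j : ι} (hj : ¬ r < ‖z j‖) : z j ∈ B := Multiset.mem_map_of_mem z (by simpa using hj)
  have hA : ∀ a ∈ A, r < ‖a‖ := by simp [A]
  have hB : ∀ b ∈ Multiset.replicate m 0 + B, ‖b‖ < r := by
    intro b hb
    rcases Multiset.mem_add.1 hb with hb | hb
    · rwa [Multiset.eq_of_mem_replicate hb, norm_zero]
    · obtain ⟨j, hj, rfl⟩ := Multiset.mem_map.1 hb
      exact (not_lt.1 (Finset.mem_filter.1 hj).2).lt_of_ne (hzr j)
  have hcard : A.card + B.card = Fintype.card ι := by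
    simp only [A, B, Multiset.card_map]
    exact Finset.card_filter_add_card_filter_not fun j ↦ r < ‖z j‖
  obtain ⟨p, hp, hp_le⟩ := exists_isStepInterpolant_coeffNorm_le hr.le _ A hB hA
  refine ⟨p, fun ν hν ↦ ⟨?_, ?_⟩, fun j ↦ ?_, hp_le.trans_eq ?_⟩
  · by_contra! hνm
    have hX : X ^ (m + 1) ∣ p := by
      refine Dvd.dvd.trans ?_ hp.dvd
      simp [pow_succ', mul_dvd_mul_left]
    exact mem_support_iff.1 hν (X_pow_dvd_iff.1 hX ν (Nat.lt_succ_of_le hνm))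
  · have := (le_degree_of_mem_supp ν hν).trans_lt hp.degree_lt
    rw [Nat.cast_lt] at this
    simp only [Multiset.card_cons, Multiset.card_add, Multiset.card_replicate] at this
    omega
  · split_ifs with hj
    · exact hp.eval_eq_one (mem_A hj)
    · exact hp.eval_eq_zero (Multiset.mem_cons_of_mem (Multiset.mem_add.2 (.inr (mem_B hj))))
  · have weight_zero : nodeWeight r (0 : K) = r⁻¹ := by
      rw [nodeWeight, norm_zero, add_zero, zero_sub, abs_neg, abs_of_pos hr, one_div]
    rw [Multiset.map_add, Multiset.prod_add, Multiset.map_replicate, Multiset.prod_replicate,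
      weight_zero, mul_left_comm]
    simp only [A, B, Multiset.map_map]
    congr 1
    exact Finset.prod_filter_mul_prod_filter_not _ _ fun j ↦ nodeWeight r (z j)

lemma norm_card_filter_le [NormedField K] (hr : 0 < r) {z : ι → K} (hzr : ∀ j, ‖z j‖ ≠ r)
    (hS : ∀ ν, m < ν → ν ≤ m + Fintype.card ι → ‖∑ j, z j ^ ν‖ ≤ S) (hS₀ : 0 ≤ S) :
    ‖((Finset.univ.filter fun j ↦ r < ‖z j‖).card : K)‖ ≤
      r⁻¹ ^ m * (∏ j, nodeWeight r (z j)) * S := by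
  obtain ⟨p, hp_supp, hp_eval, hp_le⟩ := exists_eval_eq_ite_and_coeffNorm_le m hr hzr
  have bound : ‖(∑ j, leval (z j)) p‖ ≤ coeffNorm p * S :=
    norm_map_le_coeffNorm_mul _ fun ν hν ↦ by
      simpa using hS ν (hp_supp ν hν).1 (hp_supp ν hν).2
  have sum_eval : (∑ j, leval (z j)) p = (Finset.univ.filter fun j ↦ r < ‖z j‖).card := by
    simp only [LinearMap.sum_apply, leval_apply, hp_eval, Finset.sum_boole]
  rw [sum_eval] at bound
  exact bound.trans (mul_le_mul_of_nonneg_right hp_le hS₀)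

lemma pow_mul_prod_abs_norm_sub_le [RCLike K] (hr : 0 < r) (hr_one : r ≤ 1) {z : ι → K}
    (hz : ∀ j, ‖z j‖ ≤ 1) {i : ι} (hi : ‖z i‖ = 1)
    (hS : ∀ ν, m < ν → ν ≤ m + Fintype.card ι → ‖∑ j, z j ^ ν‖ ≤ S) :
    r ^ m * ∏ j, |‖z j‖ - r| ≤ 2 ^ Fintype.card ι * S := by
  have hS₀ : 0 ≤ S := (norm_nonneg _).trans
    (hS (m + 1) m.lt_succ_self (Nat.add_le_add_left (Fintype.card_pos_iff.2 ⟨i⟩) m))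
  by_cases hzr : ∃ j, ‖z j‖ = r
  · obtain ⟨j, hj⟩ := hzr
    rw [Finset.prod_eq_zero (Finset.mem_univ j) (by rw [hj, sub_self, abs_zero]), mul_zero]
    positivity
  push Not at hzr
  have outer_pos : 0 < (Finset.univ.filter fun j ↦ r < ‖z j‖).card :=
    Finset.card_pos.2 ⟨i, by simpa [hi] using hr_one.lt_of_ne (hi ▸ hzr i).symm⟩
  have one_le : 1 ≤ r⁻¹ ^ m * (∏ j, nodeWeight r (z j)) * S := by
    refine le_trans ?_ (norm_card_filter_le hr hzr hS hS₀)
    rw [RCLike.norm_natCast]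
    exact_mod_cast outer_pos
  have dist_prod_pos : 0 < ∏ j, |‖z j‖ - r| :=
    Finset.prod_pos fun j _ ↦ abs_pos.2 (sub_ne_zero.2 (hzr j))
  calc r ^ m * ∏ j, |‖z j‖ - r|
      ≤ r ^ m * (∏ j, |‖z j‖ - r|) * (r⁻¹ ^ m * (∏ j, nodeWeight r (z j)) * S) :=
        le_mul_of_one_le_right (by positivity) one_le
    _ = (∏ j, (1 + ‖z j‖)) * S := by
        simp only [nodeWeight, Finset.prod_div_distrib, inv_pow]
        field_simp
    _ ≤ (∏ _j : ι, 2) * S := by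
        gcongr with j
        linarith [hz j]
    _ = 2 ^ Fintype.card ι * S := by rw [Finset.prod_const, Finset.card_univ]

end RadialBound

section MaximumPrinciple

open ComplexConjugate

variable {w : ℂ}

lemma mul_reciprocal_eq_norm_sq_mul (α β : ℝ) (hw : ‖w‖ = 1) :
    (α + β * w) * (α * w + β) = (‖α + β * w‖ ^ 2 : ℝ) * w := by
  have hw' : w * conj w = 1 := by rw [Complex.mul_conj', hw, Complex.ofReal_one, one_pow]
  have h : ((‖α + β * w‖ ^ 2 : ℝ) : ℂ) = (α + β * w) * (α + β * conj w) := by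
    rw [Complex.ofReal_pow, ← Complex.mul_conj', map_add, map_mul, Complex.conj_ofReal,
      Complex.conj_ofReal]
  rw [h]
  linear_combination -((α + β * w) * β) * hw'

lemma norm_sq_add_mul_mem_Icc {α β : ℝ} (hα : 0 ≤ α) (hβ : 0 ≤ β) (hw : ‖w‖ = 1) :
    ‖α + β * w‖ ^ 2 ∈ Set.Icc ((α - β) ^ 2) ((α + β) ^ 2) := by
  have hα' : ‖(α : ℂ)‖ = α := Complex.norm_of_nonneg hα
  have hβ' : ‖(β : ℂ) * w‖ = β := by rw [norm_mul, hw, mul_one, Complex.norm_of_nonneg hβ]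
  constructor
  · refine sq_le_sq.2 ?_
    rw [abs_of_nonneg (norm_nonneg _)]
    simpa only [hα', norm_neg, hβ', sub_neg_eq_add] using
      abs_norm_sub_norm_le (α : ℂ) (-((β : ℂ) * w))
  · gcongr
    simpa only [hα', hβ'] using norm_add_le (α : ℂ) (β * w)

lemma pow_mul_mul_pow_card_le_of_forall_Icc {ι : Type*} [Fintype ι] {m : ℕ} {t : ι → ℝ}
    {D α β : ℝ} (hα : 0 ≤ α) (hβ : 0 ≤ β)
    (hD : ∀ r ∈ Set.Icc ((α - β) ^ 2) ((α + β) ^ 2), r ^ m * ∏ j, |t j - r| ≤ D) :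
    α ^ (2 * m) * (α * β) ^ Fintype.card ι ≤ D := by
  let F : ℂ → ℂ := fun w ↦
    (α + β * w) ^ (2 * m) * ∏ j, (t j * w - (α + β * w) * (α * w + β))
  have F_differentiable : Differentiable ℂ F := by unfold F; fun_prop
  have norm_F_zero : ‖F 0‖ = α ^ (2 * m) * (α * β) ^ Fintype.card ι := by
    simp [F, abs_of_nonneg hα, abs_of_nonneg hβ]
  rw [← norm_F_zero]
  refine Complex.norm_le_of_forall_mem_frontier_norm_le (U := Metric.ball 0 1)
    Metric.isBounded_ball F_differentiable.diffContOnCl (fun w hw ↦ ?_) (subset_closure (by simp))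
  rw [frontier_ball _ one_ne_zero, mem_sphere_zero_iff_norm] at hw
  have norm_factor (j : ι) :
      ‖t j * w - (α + β * w) * (α * w + β)‖ = |t j - ‖α + β * w‖ ^ 2| := by
    rw [mul_reciprocal_eq_norm_sq_mul α β hw, ← sub_mul, ← Complex.ofReal_sub, norm_mul, hw,
      mul_one, Complex.norm_real, Real.norm_eq_abs]
  calc ‖F w‖ = (‖α + β * w‖ ^ 2) ^ m * ∏ j, |t j - ‖α + β * w‖ ^ 2| := by
        simp only [F, norm_mul, norm_pow, norm_prod, norm_factor, pow_mul]
    _ ≤ D := hD _ (norm_sq_add_mul_mem_Icc hα hβ hw)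

end MaximumPrinciple

lemma exp_neg_le_div_add_pow {x : ℝ} (hx : 0 ≤ x) {k : ℕ} (hk : k ≠ 0) :
    Real.exp (-x) ≤ (k / (k + x)) ^ k := by
  have hk' : (k : ℝ) ≠ 0 := Nat.cast_ne_zero.2 hk
  calc Real.exp (-x) = (Real.exp (x / k))⁻¹ ^ k := by
        rw [← Real.exp_neg, ← Real.exp_nat_mul]
        congr 1
        field_simp
    _ ≤ (x / k + 1)⁻¹ ^ k := by
        gcongr
        exact Real.add_one_le_exp _
    _ = (k / (k + x)) ^ k := by
        rw [← inv_div (k + x), add_div, div_self hk', add_comm]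

lemma two_pow_mul_turan_constant_le {m n : ℕ} (hm : 0 < m) :
    (2 : ℝ) ^ n * (n / (4 * Real.exp 1 * (m + n))) ^ n ≤
      ((2 * m + n) / (2 * (m + n)) : ℝ) ^ (2 * m) *
        ((2 * m + n) / (2 * (m + n)) * (n / (2 * (m + n)))) ^ n := by
  set α : ℝ := (2 * m + n) / (2 * (m + n)) with hα
  set β : ℝ := n / (2 * (m + n)) with hβ
  calc (2 : ℝ) ^ n * (n / (4 * Real.exp 1 * (m + n))) ^ n
      = Real.exp (-n) * β ^ n := by
        rw [Real.exp_neg, ← Real.exp_one_pow, ← inv_pow, ← mul_pow, ← mul_pow, hβ]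
        congr 1
        field_simp
        norm_num [mul_comm]
    _ ≤ α ^ (2 * m + n) * β ^ n := by
        refine mul_le_mul_of_nonneg_right ?_ (by positivity)
        have α_eq : α = (2 * m + n : ℕ) / ((2 * m + n : ℕ) + n) := by
          rw [hα]
          congr 1 <;> push_cast <;> ring
        rw [α_eq]
        exact exp_neg_le_div_add_pow (Nat.cast_nonneg n) (by omega)
    _ = α ^ (2 * m) * (α * β) ^ n := by rw [pow_add, mul_pow, mul_assoc]

lemma exists_turan_constant_le_norm_sum_pow {ι K : Type*} [Fintype ι] [RCLike K] {m : ℕ}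
    (hm : 0 < m) {z : ι → K} (hz : ∀ j, ‖z j‖ ≤ 1) {i : ι} (hi : ‖z i‖ = 1) :
    ∃ ν : ℕ, m < ν ∧ ν ≤ m + Fintype.card ι ∧
      ((Fintype.card ι : ℝ) / (4 * Real.exp 1 * (m + Fintype.card ι))) ^ Fintype.card ι ≤
        ‖∑ j, z j ^ ν‖ := by
  set n := Fintype.card ι
  have hn : 0 < n := Fintype.card_pos_iff.2 ⟨i⟩
  obtain ⟨ν, hν, hmax⟩ := Finset.exists_max_image (Finset.Ioc m (m + n))
    (fun ν ↦ ‖∑ j, z j ^ ν‖) (Finset.nonempty_Ioc.2 (Nat.lt_add_of_pos_right hn))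
  refine ⟨ν, (Finset.mem_Ioc.1 hν).1, (Finset.mem_Ioc.1 hν).2, ?_⟩
  set α : ℝ := (2 * m + n) / (2 * (m + n))
  set β : ℝ := n / (2 * (m + n))
  have α_add_β : α + β = 1 := by simp only [α, β]; field_simp; ring
  have α_sub_β_pos : 0 < α - β := by
    rw [← sub_div, add_sub_cancel_right]
    positivity
  have radial (r : ℝ) (hr : r ∈ Set.Icc ((α - β) ^ 2) ((α + β) ^ 2)) :
      r ^ m * ∏ j, |‖z j‖ - r| ≤ 2 ^ n * ‖∑ j, z j ^ ν‖ := by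
    rw [α_add_β, one_pow] at hr
    exact pow_mul_prod_abs_norm_sub_le ((pow_pos α_sub_β_pos 2).trans_le hr.1) hr.2 hz hi
      fun μ hmμ hμ ↦ hmax μ (Finset.mem_Ioc.2 ⟨hmμ, hμ⟩)
  refine le_of_mul_le_mul_left ((two_pow_mul_turan_constant_le hm).trans ?_)
    (pow_pos (zero_lt_two' ℝ) n)
  exact pow_mul_mul_pow_card_le_of_forall_Icc (by positivity) (by positivity) radial

/-- Kolesnik–Straus form of Turán's second main theorem. -/
theorem power_sum_second_main_theorem
    (n m : ℕ) (hn : 0 < n) (hm : 0 < m) (z : Fin n → ℂ)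
    (hmax : ∀ j, ‖z j‖ ≤ ‖z ⟨0, hn⟩‖) :
    ∃ ν : ℕ, m < ν ∧ ν ≤ m + n ∧
      ‖∑ j, z j ^ ν‖ ≥ ‖z ⟨0, hn⟩‖ ^ ν * ((n : ℝ) / (4 * Real.exp 1 * (m + n))) ^ n := by
  rcases eq_or_ne (z ⟨0, hn⟩) 0 with hz₀ | hz₀
  · refine ⟨m + 1, m.lt_succ_self, Nat.add_le_add_left hn m, ?_⟩
    rw [hz₀, norm_zero, zero_pow m.succ_ne_zero, zero_mul]
    exact norm_nonneg _
  have hpos : 0 < ‖z ⟨0, hn⟩‖ := norm_pos_iff.2 hz₀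
  have norm_le_one (j : Fin n) : ‖z j / z ⟨0, hn⟩‖ ≤ 1 := by
    rw [norm_div]
    exact (div_le_one hpos).2 (hmax j)
  have norm_eq_one : ‖z ⟨0, hn⟩ / z ⟨0, hn⟩‖ = 1 := by rw [div_self hz₀, norm_one]
  obtain ⟨ν, hmν, hν, h⟩ := exists_turan_constant_le_norm_sum_pow hm norm_le_one norm_eq_one
  rw [Fintype.card_fin] at hν h
  refine ⟨ν, hmν, hν, ?_⟩
  simp only [div_pow (z _)] at h
  rwa [← Finset.sum_div, norm_div, norm_pow, le_div_iff₀' (pow_pos hpos ν)] at h
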